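/- Let f_i : ℝ^d → ℝ, i ∈ {1,…,n}, be twice continuously differentiable with ‖∇²f_i(x) − ∇²f_i(y)‖ ≤ H‖x − y‖ (spectral norm), let f := (1/n)Σ_i f_i be μ-strongly convex (μ > 0), and let x* satisfy ∇f(x*) = 0. For each i, let {B_i^{jl} : j,l ∈ [d]} be real d×d matrices with ‖B_i^{jl}‖_F ≤ R and let ℓ_i : ℝ^d → ℝ^{d×d} satisfy ∇²f_i(x) = Σ_{j,l} (ℓ_i(x))_{jl} B_i^{jl} for all x and ‖ℓ_i(x) − ℓ_i(y)‖_F ≤ M₁‖x − y‖. Set N_B := 1 if for every i the family {B_i^{jl}} is pairwise orthogonal in the Frobenius inner product, and N_B := d² otherwise. Fix 0 < δ ≤ 1 and 0 < δ_M ≤ 1 and set A := δ/4, B := 6/δ − 7/2, A_M := δ_M/4, B_M := 6/δ_M − 7/2. Consider sequences z^k, w^k ∈ ℝ^d with w⁰ = z⁰, matrices L_i^k ∈ ℝ^{d×d}, and an arbitrary sequence ξ^k ∈ {0,1}, generated by: L_i^{k+1} = L_i^k + S_i^k where ‖S_i^k − (ℓ_i(z^k) − L_i^k)‖_F² ≤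 (1 − δ)‖ℓ_i(z^k) − L_i^k‖_F²; H^k := (1/n)Σ_i Σ_{j,l} (L_i^k)_{jl} B_i^{jl}; Ĥ^k a symmetric matrix with Ĥ^k ⪰ μI and ‖Ĥ^k − ∇²f(x*)‖_F ≤ ‖H^k − ∇²f(x*)‖_F; if ξ^k = 1 then g^k := ∇f(z^k) and w^{k+1} := z^k, while if ξ^k = 0 then g^k := Ĥ^k(z^k − w^k) + ∇f(w^k) and w^{k+1} := w^k; x^{k+1} := z^k − (Ĥ^k)⁻¹ g^k; z^{k+1} := z^k + v^k where ‖v^k − (x^{k+1} − z^k)‖² ≤ (1 − δ_M)‖x^{k+1} − z^k‖². Define 𝓗^k := (1/n)Σ_i ‖L_i^k − ℓ_i(x*)‖_F² and c̃₂ := min{ A_M μ²/(4H² B_M), A·A_M μ²/(16 N_B R² B_M · B · M₁²) }. If ‖z⁰ − x*‖² ≤ c̃₂ and 𝓗⁰ ≤ A_M μ²/(16 N_B R² B_M), then for every k ≥ 0: ‖z^k − x*‖² ≤ c̃₂ and 𝓗^k ≤ A_M μ²/(16 N_B R² B_M). -/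

import Mathlib

open Matrix Classical

/-- Frobenius inner product of matrices. -/
noncomputable def frobInner {d : ℕ} (M N : Matrix (Fin d) (Fin d) ℝ) : ℝ :=
  ∑ s, ∑ t, M s t * N s t

/-- Frobenius norm squared: sum of squares of all entries. -/
noncomputable def frobSq {d : ℕ} (M : Matrix (Fin d) (Fin d) ℝ) : ℝ :=
  ∑ i, ∑ j, (M i j) ^ 2

/-- Frobenius norm. -/
noncomputable def frobNorm {d : ℕ} (M : Matrix (Fin d) (Fin d) ℝ) : ℝ :=
  Real.sqrt (frobSq M)

/-- Spectral norm (operator 2-norm) of a matrix. -/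
noncomputable def specNorm {d : ℕ} (M : Matrix (Fin d) (Fin d) ℝ) : ℝ :=
  ‖Matrix.toEuclideanCLM (𝕜 := ℝ) M‖

/-- The Hessian matrix of `f` at `x` (the derivative of the gradient). -/
noncomputable def hess {d : ℕ} (f : EuclideanSpace ℝ (Fin d) → ℝ)
    (x : EuclideanSpace ℝ (Fin d)) : Matrix (Fin d) (Fin d) ℝ :=
  fun j l => fderiv ℝ (gradient f) x (EuclideanSpace.single l 1) j

/-!
In both Bernoulli cases `x (k + 1)` is the Newton-type step from `w (k + 1)` with matrix `Hhat k`,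
so its error is governed by the distance of `w (k + 1)` to `xstar` and by the error of `Hhat k`,
whose square is at most `NB * R ^ 2 * 𝓗 k`. A compressed step of `a` towards `b` shrinks
the squared distance of `a` to any reference point `c` by the factor `1 - δ / 4`, at the price of
`(6 / δ - 7 / 2) * ‖b - c‖ ^ 2`. The two thresholds make that price, for the models and for the
Hessian coefficients, at most the amount gained, provided the ball also contains `w k`; hence the
induction carries `w k` along with `z k` and `𝓗 k`.
-/

section Compression

theorem sq_add_mul_add_le {δ s : ℝ} (hδ : 0 < δ) (hs : s ^ 2 = 1 - δ) (p q : ℝ) :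
    (p + s * (p + q)) ^ 2 ≤ (1 - δ / 4) * q ^ 2 + (6 / δ - 7 / 2) * p ^ 2 := by
  -- Young's inequality for `s * q + (1 + s) * p`, weighted so that `q ^ 2` gets `1 - δ / 4`.
  have young : 3 * δ * (p + s * (p + q)) ^ 2
      ≤ 3 * δ * (1 - δ / 4) * q ^ 2 + (4 - δ) * (1 + s) ^ 2 * p ^ 2 := by
    linear_combination sq_nonneg (3 * δ / 2 * q - 2 * s * (1 + s) * p)
      + (3 * δ * q ^ 2 + 4 * (1 + s) ^ 2 * p ^ 2) * hs
  have coeff : (4 - δ) * (1 + s) ^ 2 ≤ 3 * δ * (6 / δ - 7 / 2) := by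
    have hs_sq : (1 + s) ^ 2 ≤ 4 - 2 * δ := by nlinarith [sq_nonneg (1 - s)]
    have hδ4 : 0 ≤ 4 - δ := by nlinarith [sq_nonneg s]
    calc (4 - δ) * (1 + s) ^ 2 ≤ (4 - δ) * (4 - 2 * δ) := by gcongr
      _ ≤ 18 - 21 / 2 * δ := by nlinarith [sq_nonneg s]
      _ = 3 * δ * (6 / δ - 7 / 2) := by field_simp; ring
  refine le_of_mul_le_mul_left ?_ (show 0 < 3 * δ by positivity)
  linarith [mul_le_mul_of_nonneg_right coeff (sq_nonneg p)]

theorem one_sub_mul_add_le {α β a b c : ℝ} (hα : α ≤ 1) (ha : a ≤ c) (hb : β * b ≤ α * c) :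
    (1 - α) * a + β * b ≤ c := by
  linarith [mul_le_mul_of_nonneg_left ha (sub_nonneg.mpr hα)]

theorem compression_coeff_pos {δ : ℝ} (hδ : 0 < δ) (hδ1 : δ ≤ 1) : 0 < 6 / δ - 7 / 2 := by
  have : 6 ≤ 6 / δ := by rw [le_div_iff₀ hδ]; linarith
  linarith

variable {E : Type*} [SeminormedAddCommGroup E] {δ : ℝ}

theorem norm_sq_compressed_step_sub_le (hδ : 0 < δ) (hδ1 : δ ≤ 1) {a b q : E}
    (hq : ‖q - (b - a)‖ ^ 2 ≤ (1 - δ) * ‖b - a‖ ^ 2) (c : E) :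
    ‖a + q - c‖ ^ 2 ≤ (1 - δ / 4) * ‖a - c‖ ^ 2 + (6 / δ - 7 / 2) * ‖b - c‖ ^ 2 := by
  have hs : √(1 - δ) ^ 2 = 1 - δ := Real.sq_sqrt (by linarith)
  have herr : ‖q - (b - a)‖ ≤ √(1 - δ) * ‖b - a‖ := by
    refine le_of_sq_le_sq ?_ (by positivity)
    rwa [mul_pow, hs]
  have htri : ‖a + q - c‖ ≤ ‖b - c‖ + √(1 - δ) * (‖b - c‖ + ‖a - c‖) := calc
    ‖a + q - c‖ = ‖(b - c) + (q - (b - a))‖ := by congr 1; abel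
    _ ≤ ‖b - c‖ + √(1 - δ) * ‖b - a‖ := (norm_add_le _ _).trans (by gcongr)
    _ ≤ ‖b - c‖ + √(1 - δ) * (‖b - c‖ + ‖a - c‖) := by
      rw [← sub_sub_sub_cancel_right b a c]
      gcongr
      exact norm_sub_le _ _
  exact (pow_le_pow_left₀ (norm_nonneg _) htri 2).trans (sq_add_mul_add_le hδ hs _ _)

theorem norm_sq_compressed_step_sub_le_of_le (hδ : 0 < δ) (hδ1 : δ ≤ 1) {a b q c : E} {r : ℝ}
    (hq : ‖q - (b - a)‖ ^ 2 ≤ (1 - δ) * ‖b - a‖ ^ 2) (ha : ‖a - c‖ ^ 2 ≤ r)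
    (hb : (6 / δ - 7 / 2) * ‖b - c‖ ^ 2 ≤ δ / 4 * r) : ‖a + q - c‖ ^ 2 ≤ r :=
  (norm_sq_compressed_step_sub_le hδ hδ1 hq c).trans (one_sub_mul_add_le (by linarith) ha hb)

theorem average_norm_sq_compressed_step_sub_le (hδ : 0 < δ) (hδ1 : δ ≤ 1) {n : ℕ}
    {a b q : Fin n → E}
    (hq : ∀ i, ‖q i - (b i - a i)‖ ^ 2 ≤ (1 - δ) * ‖b i - a i‖ ^ 2) (c : Fin n → E) :
    1 / (n : ℝ) * ∑ i, ‖a i + q i - c i‖ ^ 2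
      ≤ (1 - δ / 4) * (1 / (n : ℝ) * ∑ i, ‖a i - c i‖ ^ 2)
        + (6 / δ - 7 / 2) * (1 / (n : ℝ) * ∑ i, ‖b i - c i‖ ^ 2) := by
  calc 1 / (n : ℝ) * ∑ i, ‖a i + q i - c i‖ ^ 2
      ≤ 1 / (n : ℝ) * ∑ i, ((1 - δ / 4) * ‖a i - c i‖ ^ 2
          + (6 / δ - 7 / 2) * ‖b i - c i‖ ^ 2) := by
        gcongr with i
        exact norm_sq_compressed_step_sub_le hδ hδ1 (hq i) (c i)
    _ = _ := by rw [Finset.sum_add_distrib, ← Finset.mul_sum, ← Finset.mul_sum]; ring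

end Compression

section NewtonStep

variable {E F : Type*} [NormedAddCommGroup E] [NormedSpace ℝ E]
  [NormedAddCommGroup F] [NormedSpace ℝ F] {G : E → F} {H : ℝ} {a : E}

theorem norm_sub_sub_fderiv_le (hG : Differentiable ℝ G)
    (hLip : ∀ x, ‖fderiv ℝ G x - fderiv ℝ G a‖ ≤ H * ‖x - a‖) (x : E) :
    ‖G x - G a - fderiv ℝ G a (x - a)‖ ≤ H * ‖x - a‖ * ‖x - a‖ := by
  obtain rfl | hxa := eq_or_ne x a
  · simp
  have hH : 0 ≤ H := nonneg_of_mul_nonneg_left ((norm_nonneg _).trans (hLip x))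
    (norm_pos_iff.mpr (sub_ne_zero.mpr hxa))
  refine (convex_closedBall a ‖x - a‖).norm_image_sub_le_of_norm_fderiv_le'
    (fun y _ => hG y) (fun y hy => (hLip y).trans ?_)
    (Metric.mem_closedBall_self (norm_nonneg _)) (mem_closedBall_iff_norm.mpr le_rfl)
  gcongr
  exact mem_closedBall_iff_norm.mp hy

theorem mul_norm_newton_step_sub_le {μ : ℝ} {A : E →L[ℝ] F} (hA : ∀ u, μ * ‖u‖ ≤ ‖A u‖)
    (hG : Differentiable ℝ G) (hLip : ∀ x, ‖fderiv ℝ G x - fderiv ℝ G a‖ ≤ H * ‖x - a‖)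
    (ha : G a = 0) {x y : E} (hstep : A (y - x) = -G x) :
    μ * ‖y - a‖ ≤ (‖A - fderiv ℝ G a‖ + H * ‖x - a‖) * ‖x - a‖ := by
  have herr : A (y - a) = (A - fderiv ℝ G a) (x - a) - (G x - G a - fderiv ℝ G a (x - a)) := by
    rw [← sub_add_sub_cancel y x a, map_add, hstep, ha, _root_.sub_apply]
    abel
  calc μ * ‖y - a‖ ≤ ‖A (y - a)‖ := hA _
    _ ≤ ‖(A - fderiv ℝ G a) (x - a)‖ + ‖G x - G a - fderiv ℝ G a (x - a)‖ :=
      herr ▸ norm_sub_le _ _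
    _ ≤ ‖A - fderiv ℝ G a‖ * ‖x - a‖ + H * ‖x - a‖ * ‖x - a‖ :=
      add_le_add (ContinuousLinearMap.le_opNorm _ _) (norm_sub_sub_fderiv_le hG hLip x)
    _ = _ := by ring

theorem mul_norm_sq_newton_step_sub_le {μ α β c : ℝ} {A : E →L[ℝ] F} (hμ : 0 < μ) (hβ : 0 ≤ β)
    (hA : ∀ u, μ * ‖u‖ ≤ ‖A u‖) (hG : Differentiable ℝ G)
    (hLip : ∀ x, ‖fderiv ℝ G x - fderiv ℝ G a‖ ≤ H * ‖x - a‖)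
    (ha : G a = 0) {x y : E} (hstep : A (y - x) = -G x) (hx : ‖x - a‖ ^ 2 ≤ c)
    (hAa : 16 * β * ‖A - fderiv ℝ G a‖ ^ 2 ≤ α * μ ^ 2) (hc : 4 * β * (H ^ 2 * c) ≤ α * μ ^ 2) :
    β * ‖y - a‖ ^ 2 ≤ α * c := by
  set r := ‖x - a‖
  set ε := ‖A - fderiv ℝ G a‖
  have hHr : H ^ 2 * r ^ 2 ≤ H ^ 2 * c := by gcongr
  have hrate : β * (ε + H * r) ^ 2 ≤ α * μ ^ 2 := calc
    β * (ε + H * r) ^ 2 ≤ β * (2 * (ε ^ 2 + (H * r) ^ 2)) := by gcongr; exact add_sq_le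
    _ = 2 * (β * ε ^ 2) + 2 * (β * (H ^ 2 * r ^ 2)) := by ring
    _ ≤ 2 * (β * ε ^ 2) + 2 * (β * (H ^ 2 * c)) := by gcongr
    _ ≤ α * μ ^ 2 := by nlinarith [mul_nonneg hβ (sq_nonneg ε)]
  have hlin : (μ * ‖y - a‖) ^ 2 ≤ ((ε + H * r) * r) ^ 2 :=
    pow_le_pow_left₀ (by positivity) (mul_norm_newton_step_sub_le hA hG hLip ha hstep) 2
  refine le_of_mul_le_mul_left ?_ (show 0 < μ ^ 2 by positivity)
  calc μ ^ 2 * (β * ‖y - a‖ ^ 2) = β * (μ * ‖y - a‖) ^ 2 := by ring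
    _ ≤ β * ((ε + H * r) * r) ^ 2 := by gcongr
    _ = β * (ε + H * r) ^ 2 * r ^ 2 := by ring
    _ ≤ α * μ ^ 2 * c := by
      gcongr
      exact (mul_nonneg hβ (sq_nonneg _)).trans hrate
    _ = μ ^ 2 * (α * c) := by ring

end NewtonStep

section Average

theorem norm_sum_sq_le_card_mul_sum_norm_sq {ι E : Type*} [SeminormedAddCommGroup E]
    (s : Finset ι) (v : ι → E) : ‖∑ i ∈ s, v i‖ ^ 2 ≤ s.card * ∑ i ∈ s, ‖v i‖ ^ 2 :=
  (pow_le_pow_left₀ (norm_nonneg _) (norm_sum_le s v) 2).trans sq_sum_le_card_mul_sum_sq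

theorem average_le_of_forall_le {n : ℕ} (hn : 1 ≤ n) {u : Fin n → ℝ} {C : ℝ} (h : ∀ i, u i ≤ C) :
    1 / (n : ℝ) * ∑ i, u i ≤ C := by
  have hn' : (0 : ℝ) < n := by exact_mod_cast hn
  rw [one_div, inv_mul_le_iff₀ hn']
  simpa using Finset.sum_le_card_nsmul Finset.univ u C fun i _ => h i

variable {E F : Type*} [SeminormedAddCommGroup E] [SeminormedAddCommGroup F] {n : ℕ}

theorem norm_average_le [NormedSpace ℝ E] (v : Fin n → E) :
    ‖(1 / (n : ℝ)) • ∑ i, v i‖ ≤ 1 / (n : ℝ) * ∑ i, ‖v i‖ := by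
  rw [norm_smul, Real.norm_of_nonneg (by positivity)]
  gcongr
  exact norm_sum_le _ _

theorem norm_average_sq_le [NormedSpace ℝ E] (v : Fin n → E) :
    ‖(1 / (n : ℝ)) • ∑ i, v i‖ ^ 2 ≤ 1 / (n : ℝ) * ∑ i, ‖v i‖ ^ 2 := by
  rw [norm_smul, mul_pow, Real.norm_of_nonneg (by positivity)]
  calc (1 / (n : ℝ)) ^ 2 * ‖∑ i, v i‖ ^ 2
      ≤ (1 / (n : ℝ)) ^ 2 * (n * ∑ i, ‖v i‖ ^ 2) := by
        gcongr
        simpa using norm_sum_sq_le_card_mul_sum_norm_sq Finset.univ v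
    _ = 1 / (n : ℝ) * ∑ i, ‖v i‖ ^ 2 := by field_simp

theorem norm_sq_average_map_sub_le [Module ℝ E] [NormedSpace ℝ F] {K : ℝ} {T : Fin n → E →ₗ[ℝ] F}
    (hT : ∀ i u, ‖T i u‖ ^ 2 ≤ K * ‖u‖ ^ 2) (a b : Fin n → E) :
    ‖(1 / (n : ℝ)) • ∑ i, T i (a i) - (1 / (n : ℝ)) • ∑ i, T i (b i)‖ ^ 2
      ≤ K * (1 / (n : ℝ) * ∑ i, ‖a i - b i‖ ^ 2) := by
  simp only [← smul_sub, ← Finset.sum_sub_distrib, ← map_sub]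
  calc _ ≤ 1 / (n : ℝ) * ∑ i, ‖T i (a i - b i)‖ ^ 2 := norm_average_sq_le _
    _ ≤ 1 / (n : ℝ) * ∑ i, K * ‖a i - b i‖ ^ 2 := by gcongr; exact hT _ _
    _ = K * (1 / (n : ℝ) * ∑ i, ‖a i - b i‖ ^ 2) := by rw [← Finset.mul_sum]; ring

end Average

section LinearCombination

variable {ι E : Type*} [Fintype ι] {R : ℝ} {b : ι → E}

theorem norm_sum_smul_sq_le_card_mul [SeminormedAddCommGroup E] [NormedSpace ℝ E]
    (hb : ∀ i, ‖b i‖ ≤ R) (c : ι → ℝ) :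
    ‖∑ i, c i • b i‖ ^ 2 ≤ Fintype.card ι * R ^ 2 * ∑ i, c i ^ 2 := by
  calc ‖∑ i, c i • b i‖ ^ 2 ≤ Fintype.card ι * ∑ i, ‖c i • b i‖ ^ 2 :=
        norm_sum_sq_le_card_mul_sum_norm_sq Finset.univ _
    _ = Fintype.card ι * ∑ i, ‖b i‖ ^ 2 * c i ^ 2 := by
        simp only [norm_smul, mul_pow, Real.norm_eq_abs, sq_abs, mul_comm]
    _ ≤ Fintype.card ι * ∑ i, R ^ 2 * c i ^ 2 := by gcongr; exact hb _
    _ = Fintype.card ι * R ^ 2 * ∑ i, c i ^ 2 := by rw [← Finset.mul_sum, mul_assoc]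

variable [SeminormedAddCommGroup E] [InnerProductSpace ℝ E]

theorem norm_sum_sq_of_pairwise_inner_eq_zero
    (hb : Pairwise fun i j => inner ℝ (b i) (b j) = 0) : ‖∑ i, b i‖ ^ 2 = ∑ i, ‖b i‖ ^ 2 := by
  simp only [← real_inner_self_eq_norm_sq, sum_inner, inner_sum]
  exact Finset.sum_congr rfl fun i _ => Fintype.sum_eq_single i fun j hj => hb hj

theorem norm_sum_smul_sq_le_of_pairwise_inner_eq_zero (hb : ∀ i, ‖b i‖ ≤ R)
    (horth : Pairwise fun i j => inner ℝ (b i) (b j) = 0) (c : ι → ℝ) :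
    ‖∑ i, c i • b i‖ ^ 2 ≤ R ^ 2 * ∑ i, c i ^ 2 := by
  have hcb : Pairwise fun i j => inner ℝ (c i • b i) (c j • b j) = 0 := fun i j hij => by
    simp [inner_smul_left, inner_smul_right, horth hij]
  calc ‖∑ i, c i • b i‖ ^ 2 = ∑ i, ‖b i‖ ^ 2 * c i ^ 2 := by
        simp only [norm_sum_sq_of_pairwise_inner_eq_zero hcb, norm_smul, mul_pow,
          Real.norm_eq_abs, sq_abs, mul_comm]
    _ ≤ ∑ i, R ^ 2 * c i ^ 2 := by gcongr; exact hb _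
    _ = R ^ 2 * ∑ i, c i ^ 2 := by rw [← Finset.mul_sum]

end LinearCombination

section Hessian

theorem differentiable_gradient {F : Type*} [NormedAddCommGroup F] [InnerProductSpace ℝ F]
    [CompleteSpace F] {f : F → ℝ} (hf : ContDiff ℝ 2 f) : Differentiable ℝ (gradient f) :=
  (InnerProductSpace.toDual ℝ F).symm.toContinuousLinearEquiv.differentiable.comp
    ((hf.fderiv_right (m := 1) (by norm_num)).differentiable (by norm_num))

theorem gradient_const_mul_sum {F ι : Type*} [NormedAddCommGroup F] [InnerProductSpace ℝ F]
    [CompleteSpace F] {s : Finset ι} {f : ι → F → ℝ} (hf : ∀ i ∈ s, Differentiable ℝ (f i))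
    (c : ℝ) :
    gradient (fun x => c * ∑ i ∈ s, f i x) = fun x => c • ∑ i ∈ s, gradient (f i) x := by
  funext x
  have hfx : ∀ i ∈ s, DifferentiableAt ℝ (f i) x := fun i hi => hf i hi x
  simp only [gradient]
  rw [fderiv_const_mul (DifferentiableAt.fun_sum hfx), fderiv_fun_sum hfx, map_smul, map_sum]

variable {d : ℕ}

theorem toEuclideanCLM_hess (f : EuclideanSpace ℝ (Fin d) → ℝ) (x : EuclideanSpace ℝ (Fin d)) :
    toEuclideanCLM (𝕜 := ℝ) (hess f x) = fderiv ℝ (gradient f) x := by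
  refine ContinuousLinearMap.coe_injective
    ((EuclideanSpace.basisFun (Fin d) ℝ).toBasis.ext fun l => ?_)
  ext j
  simp [hess]

theorem fderiv_gradient_const_mul_sum {ι : Type*} {s : Finset ι}
    {f : ι → EuclideanSpace ℝ (Fin d) → ℝ} (hf : ∀ i ∈ s, Differentiable ℝ (f i))
    (hf' : ∀ i ∈ s, Differentiable ℝ (gradient (f i))) (c : ℝ) (x : EuclideanSpace ℝ (Fin d)) :
    fderiv ℝ (gradient fun x => c * ∑ i ∈ s, f i x) x
      = c • ∑ i ∈ s, fderiv ℝ (gradient (f i)) x := by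
  have hfx : ∀ i ∈ s, DifferentiableAt ℝ (gradient (f i)) x := fun i hi => hf' i hi x
  rw [gradient_const_mul_sum hf, fderiv_fun_const_smul (DifferentiableAt.fun_sum hfx),
    fderiv_fun_sum hfx]

end Hessian

section Matrix

variable {ι : Type*} [Fintype ι] [DecidableEq ι] {μ : ℝ} {M : Matrix ι ι ℝ}

theorem mul_norm_le_norm_toEuclideanCLM (hM : (M - μ • (1 : Matrix ι ι ℝ)).PosSemidef)
    (u : EuclideanSpace ℝ ι) : μ * ‖u‖ ≤ ‖toEuclideanCLM (𝕜 := ℝ) M u‖ := by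
  have hinner : μ * ‖u‖ ^ 2 ≤ inner ℝ u (toEuclideanCLM (𝕜 := ℝ) M u) := by
    have := hM.dotProduct_mulVec_nonneg u.ofLp
    rw [star_trivial, ← inner_toEuclideanCLM] at this
    simpa [inner_sub_right, inner_smul_right] using this
  obtain hu | hu := (norm_nonneg u).eq_or_lt
  · simp [← hu]
  refine le_of_mul_le_mul_left ?_ hu
  linarith [real_inner_le_norm u (toEuclideanCLM (𝕜 := ℝ) M u)]

theorem isUnit_of_posSemidef_sub_smul_one (hμ : 0 < μ)
    (hM : (M - μ • (1 : Matrix ι ι ℝ)).PosSemidef) : IsUnit M := by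
  have hpos : (μ • (1 : Matrix ι ι ℝ)).PosDef := PosDef.one.smul hμ
  simpa using (hpos.posSemidef_add hM).isUnit

theorem toEuclideanCLM_inv_apply_cancel (hM : IsUnit M) (u : EuclideanSpace ℝ ι) :
    toEuclideanCLM (𝕜 := ℝ) M (toEuclideanCLM (𝕜 := ℝ) M⁻¹ u) = u := by
  rw [← mul_apply_eq_comp, ← map_mul, mul_nonsing_inv _ ((isUnit_iff_isUnit_det M).mp hM), map_one,
    one_apply_eq_self]

theorem toEuclideanCLM_sub_eq_neg_of_bl1_step (hM : IsUnit M)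
    {G : EuclideanSpace ℝ ι → EuclideanSpace ℝ ι} {z w w' x g : EuclideanSpace ℝ ι}
    (hg : g = G z ∧ w' = z ∨ g = toEuclideanCLM (𝕜 := ℝ) M (z - w) + G w ∧ w' = w)
    (hx : x = z - toEuclideanCLM (𝕜 := ℝ) M⁻¹ g) :
    toEuclideanCLM (𝕜 := ℝ) M (x - w') = -G w' := by
  have hMx : toEuclideanCLM (𝕜 := ℝ) M (x - z) = -g := by
    rw [hx, sub_sub_cancel_left, map_neg, toEuclideanCLM_inv_apply_cancel hM]
  obtain ⟨rfl, rfl⟩ | ⟨rfl, rfl⟩ := hg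
  · exact hMx
  · rw [← sub_add_sub_cancel x z w', map_add, hMx]
    abel

end Matrix

section Frobenius

open scoped Matrix.Norms.Frobenius

theorem frobenius_norm_sq {m n : Type*} [Fintype m] [Fintype n] (M : Matrix m n ℝ) :
    ‖M‖ ^ 2 = ∑ i, ∑ j, M i j ^ 2 := by
  rw [frobenius_norm_def, ← Real.sqrt_eq_rpow, Real.sq_sqrt (by positivity)]
  simp

theorem norm_toEuclideanCLM_le_frobenius {n : Type*} [Fintype n] [DecidableEq n]
    (M : Matrix n n ℝ) : ‖toEuclideanCLM (𝕜 := ℝ) M‖ ≤ ‖M‖ := by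
  refine ContinuousLinearMap.opNorm_le_bound _ (norm_nonneg M) fun u => ?_
  have := frobenius_norm_mul M (replicateCol Unit u.ofLp)
  rwa [← replicateCol_mulVec, frobenius_norm_replicateCol, frobenius_norm_replicateCol] at this

/-- Synthesis operator of a doubly indexed family `B`: it sends a matrix `C` of coefficients to
`∑ C j l • B j l`, as in the paper's representation of Hessians and Hessian estimates. -/
def synthesis {m n E : Type*} [Fintype m] [Fintype n] [AddCommGroup E] [Module ℝ E]
    (B : m → n → E) : Matrix m n ℝ →ₗ[ℝ] E where
  toFun C := ∑ j, ∑ l, C j l • B j l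
  map_add' C D := by simp only [Matrix.add_apply, add_smul, Finset.sum_add_distrib]
  map_smul' c C := by
    simp only [Matrix.smul_apply, smul_assoc, Finset.smul_sum, RingHom.id_apply]

section Synthesis

variable {m n E : Type*} [Fintype m] [Fintype n] [SeminormedAddCommGroup E] {R : ℝ} {B : m → n → E}

theorem norm_sq_synthesis_le [NormedSpace ℝ E] (hB : ∀ j l, ‖B j l‖ ≤ R) (C : Matrix m n ℝ) :
    ‖synthesis B C‖ ^ 2 ≤ Fintype.card m * Fintype.card n * R ^ 2 * ‖C‖ ^ 2 := by
  simpa [Fintype.sum_prod_type, synthesis, frobenius_norm_sq] using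
    norm_sum_smul_sq_le_card_mul (fun p : m × n => hB p.1 p.2) fun p => C p.1 p.2

theorem norm_sq_synthesis_le_of_orthogonal [InnerProductSpace ℝ E] (hB : ∀ j l, ‖B j l‖ ≤ R)
    (horth : ∀ j l j' l', (j, l) ≠ (j', l') → inner ℝ (B j l) (B j' l') = 0) (C : Matrix m n ℝ) :
    ‖synthesis B C‖ ^ 2 ≤ R ^ 2 * ‖C‖ ^ 2 := by
  simpa [Fintype.sum_prod_type, synthesis, frobenius_norm_sq] using
    norm_sum_smul_sq_le_of_pairwise_inner_eq_zero (fun p : m × n => hB p.1 p.2)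
      (fun p q hpq => horth p.1 p.2 q.1 q.2 hpq) fun p => C p.1 p.2

end Synthesis

variable {d : ℕ}

theorem frobSq_eq_norm_sq (M : Matrix (Fin d) (Fin d) ℝ) : frobSq M = ‖M‖ ^ 2 :=
  (frobenius_norm_sq M).symm

theorem frobNorm_eq_norm (M : Matrix (Fin d) (Fin d) ℝ) : frobNorm M = ‖M‖ := by
  rw [frobNorm, frobSq_eq_norm_sq, Real.sqrt_sq (norm_nonneg M)]

/-- The inner product `frobInner` on matrices with the Frobenius norm. -/
noncomputable local instance frobeniusInnerProductSpace :
    InnerProductSpace ℝ (Matrix (Fin d) (Fin d) ℝ) where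
  inner := frobInner
  norm_sq_eq_re_inner M := by
    rw [frobenius_norm_sq]
    simp [frobInner, sq]
  conj_inner_symm M N := by simp [frobInner, mul_comm]
  add_left M N P := by simp [frobInner, add_mul, Finset.sum_add_distrib]
  smul_left M N c := by simp [frobInner, Finset.mul_sum, mul_assoc]

section Estimates

variable {n : ℕ} {a b q c : Fin n → Matrix (Fin d) (Fin d) ℝ}

theorem average_frobSq_compressed_step_sub_le_of_le {δ r : ℝ} (hδ : 0 < δ) (hδ1 : δ ≤ 1)
    (hq : ∀ i, frobSq (q i - (b i - a i)) ≤ (1 - δ) * frobSq (b i - a i))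
    (ha : 1 / (n : ℝ) * ∑ i, frobSq (a i - c i) ≤ r)
    (hb : (6 / δ - 7 / 2) * (1 / (n : ℝ) * ∑ i, frobSq (b i - c i)) ≤ δ / 4 * r) :
    1 / (n : ℝ) * ∑ i, frobSq (a i + q i - c i) ≤ r := by
  simp only [frobSq_eq_norm_sq] at *
  exact (average_norm_sq_compressed_step_sub_le hδ hδ1 hq c).trans
    (one_sub_mul_add_le (by linarith) ha hb)

theorem average_frobSq_sub_le (hn : 1 ≤ n) {K ρ r : ℝ} (h : ∀ i, frobNorm (b i - c i) ≤ K * ρ)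
    (hρ : ρ ^ 2 ≤ r) : 1 / (n : ℝ) * ∑ i, frobSq (b i - c i) ≤ K ^ 2 * r := by
  refine average_le_of_forall_le hn fun i => ?_
  rw [frobSq_eq_norm_sq, ← frobNorm_eq_norm]
  calc frobNorm (b i - c i) ^ 2 ≤ (K * ρ) ^ 2 := pow_le_pow_left₀ (Real.sqrt_nonneg _) (h i) 2
    _ = K ^ 2 * ρ ^ 2 := mul_pow K ρ 2
    _ ≤ K ^ 2 * r := by gcongr

theorem norm_sq_synthesis_le_ite {B : Fin n → Fin d → Fin d → Matrix (Fin d) (Fin d) ℝ} {R NB : ℝ}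
    (hBR : ∀ i j l, frobNorm (B i j l) ≤ R)
    (hNB : NB = if (∀ i (j l j' l' : Fin d), (j, l) ≠ (j', l') →
      frobInner (B i j l) (B i j' l') = 0) then (1 : ℝ) else (d : ℝ) ^ 2)
    (i : Fin n) (C : Matrix (Fin d) (Fin d) ℝ) :
    ‖synthesis (B i) C‖ ^ 2 ≤ NB * R ^ 2 * ‖C‖ ^ 2 := by
  simp only [frobNorm_eq_norm] at hBR
  rw [hNB]
  split_ifs with horth
  · simpa using norm_sq_synthesis_le_of_orthogonal (hBR i) (horth i) C
  · simpa [sq] using norm_sq_synthesis_le (hBR i) C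

theorem frobSq_average_synthesis_sub_le
    {B : Fin n → Fin d → Fin d → Matrix (Fin d) (Fin d) ℝ} {R NB : ℝ}
    (hBR : ∀ i j l, frobNorm (B i j l) ≤ R)
    (hNB : NB = if (∀ i (j l j' l' : Fin d), (j, l) ≠ (j', l') →
      frobInner (B i j l) (B i j' l') = 0) then (1 : ℝ) else (d : ℝ) ^ 2) :
    frobSq ((1 / (n : ℝ)) • ∑ i, synthesis (B i) (a i)
        - (1 / (n : ℝ)) • ∑ i, synthesis (B i) (c i))
      ≤ NB * R ^ 2 * (1 / (n : ℝ) * ∑ i, frobSq (a i - c i)) := by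
  simp only [frobSq_eq_norm_sq]
  exact norm_sq_average_map_sub_le (norm_sq_synthesis_le_ite hBR hNB) a c

theorem norm_sq_toEuclideanCLM_sub_le_frobSq_of_le {M P Q : Matrix (Fin d) (Fin d) ℝ}
    (h : frobNorm (P - Q) ≤ frobNorm (M - Q)) :
    ‖toEuclideanCLM (𝕜 := ℝ) P - toEuclideanCLM (𝕜 := ℝ) Q‖ ^ 2 ≤ frobSq (M - Q) := by
  simp only [frobNorm_eq_norm] at h
  rw [frobSq_eq_norm_sq, ← map_sub]
  exact pow_le_pow_left₀ (norm_nonneg _) ((norm_toEuclideanCLM_le_frobenius _).trans h) 2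

end Estimates

end Frobenius

section BL1

theorem mul_le_of_eq_min_thresholds {α β αM βM ν H N R M c : ℝ} (hα : 0 ≤ α) (hβ : 0 ≤ β)
    (hαM : 0 ≤ αM) (hβM : 0 ≤ βM) (hν : 0 ≤ ν) (hN : 0 ≤ N)
    (hc : c = min (αM * ν / (4 * H ^ 2 * βM)) (α * αM * ν / (16 * N * R ^ 2 * βM * β * M ^ 2))) :
    4 * βM * (H ^ 2 * c) ≤ αM * ν ∧ β * (M ^ 2 * c) ≤ α * (αM * ν / (16 * N * R ^ 2 * βM)) := by
  -- `mul_le_of_le_div₀` also covers vanishing denominators, where the quotient is `0`.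
  have hc_model := mul_le_of_le_div₀ (by positivity) (by positivity)
    (hc.trans_le (min_le_left _ _))
  have hc_hess : c ≤ α * (αM * ν / (16 * N * R ^ 2 * βM)) / (β * M ^ 2) := by
    rw [← mul_div_assoc, div_div, ← mul_assoc, ← mul_assoc]
    exact hc.trans_le (min_le_right _ _)
  have := mul_le_of_le_div₀ (by positivity) (by positivity) hc_hess
  constructor <;> linarith

variable {d n : ℕ} {f : Fin n → EuclideanSpace ℝ (Fin d) → ℝ}

theorem differentiable_gradient_average (hf : ∀ i, Differentiable ℝ (f i))
    (hf' : ∀ i, Differentiable ℝ (gradient (f i))) :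
    Differentiable ℝ (gradient fun x => 1 / (n : ℝ) * ∑ i, f i x) := by
  rw [gradient_const_mul_sum fun i _ => hf i]
  exact (Differentiable.fun_sum fun i _ => hf' i).fun_const_smul _

theorem hess_average (hf : ∀ i, Differentiable ℝ (f i))
    (hf' : ∀ i, Differentiable ℝ (gradient (f i))) (x : EuclideanSpace ℝ (Fin d)) :
    hess (fun x => 1 / (n : ℝ) * ∑ i, f i x) x = (1 / (n : ℝ)) • ∑ i, hess (f i) x := by
  refine EquivLike.injective (toEuclideanCLM (n := Fin d) (𝕜 := ℝ)) ?_
  simp only [map_smul, map_sum, toEuclideanCLM_hess]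
  exact fderiv_gradient_const_mul_sum (fun i _ => hf i) (fun i _ => hf' i) _ x

theorem norm_fderiv_gradient_average_sub_le (hf : ∀ i, Differentiable ℝ (f i))
    (hf' : ∀ i, Differentiable ℝ (gradient (f i))) (hn : 1 ≤ n)
    {x y : EuclideanSpace ℝ (Fin d)} {C : ℝ}
    (h : ∀ i, specNorm (hess (f i) x - hess (f i) y) ≤ C) :
    ‖fderiv ℝ (gradient fun x => 1 / (n : ℝ) * ∑ i, f i x) x
      - fderiv ℝ (gradient fun x => 1 / (n : ℝ) * ∑ i, f i x) y‖ ≤ C := by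
  rw [← toEuclideanCLM_hess, ← toEuclideanCLM_hess, hess_average hf hf', hess_average hf hf',
    ← map_sub, ← smul_sub, ← Finset.sum_sub_distrib, map_smul, map_sum]
  exact (norm_average_le _).trans (average_le_of_forall_le hn h)

theorem norm_sq_toEuclideanCLM_sub_fderiv_gradient_le (hf : ∀ i, Differentiable ℝ (f i))
    (hf' : ∀ i, Differentiable ℝ (gradient (f i)))
    {B : Fin n → Fin d → Fin d → Matrix (Fin d) (Fin d) ℝ} {R NB : ℝ}
    (hBR : ∀ i j l, frobNorm (B i j l) ≤ R)
    (hNB : NB = if (∀ i (j l j' l' : Fin d), (j, l) ≠ (j', l') →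
      frobInner (B i j l) (B i j' l') = 0) then (1 : ℝ) else (d : ℝ) ^ 2)
    {x : EuclideanSpace ℝ (Fin d)} {C L : Fin n → Matrix (Fin d) (Fin d) ℝ}
    (hrep : ∀ i, hess (f i) x = ∑ j, ∑ l, C i j l • B i j l) {Hhat : Matrix (Fin d) (Fin d) ℝ}
    (hproj : frobNorm (Hhat - hess (fun x => 1 / (n : ℝ) * ∑ i, f i x) x)
      ≤ frobNorm ((1 / (n : ℝ)) • ∑ i, ∑ j, ∑ l, L i j l • B i j l
        - hess (fun x => 1 / (n : ℝ) * ∑ i, f i x) x)) :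
    ‖toEuclideanCLM (𝕜 := ℝ) Hhat - fderiv ℝ (gradient fun x => 1 / (n : ℝ) * ∑ i, f i x) x‖ ^ 2
      ≤ NB * R ^ 2 * (1 / (n : ℝ) * ∑ i, frobSq (L i - C i)) := by
  rw [← toEuclideanCLM_hess]
  refine (norm_sq_toEuclideanCLM_sub_le_frobSq_of_le hproj).trans ?_
  rw [hess_average hf hf']
  simp only [hrep]
  exact frobSq_average_synthesis_sub_le hBR hNB

end BL1

theorem bl1_neighborhood_invariance_general {d n : ℕ} (hn : 1 ≤ n)
    {f : Fin n → EuclideanSpace ℝ (Fin d) → ℝ} (hf : ∀ i, Differentiable ℝ (f i))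
    (hf' : ∀ i, Differentiable ℝ (gradient (f i))) {μ : ℝ} (hμ : 0 < μ)
    {fbar : EuclideanSpace ℝ (Fin d) → ℝ} (hfbar : fbar = fun x => (1 / (n : ℝ)) * ∑ i, f i x)
    {xstar : EuclideanSpace ℝ (Fin d)} (hstar : gradient fbar xstar = 0)
    {H : ℝ} (hH : ∀ i x, specNorm (hess (f i) x - hess (f i) xstar) ≤ H * ‖x - xstar‖)
    {R : ℝ} {B : Fin n → Fin d → Fin d → Matrix (Fin d) (Fin d) ℝ}
    (hBR : ∀ i j l, frobNorm (B i j l) ≤ R)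
    {ℓ : Fin n → EuclideanSpace ℝ (Fin d) → Matrix (Fin d) (Fin d) ℝ}
    (hrep : ∀ i, hess (f i) xstar = ∑ j, ∑ l, (ℓ i xstar) j l • B i j l)
    {M₁ : ℝ} (hℓLip : ∀ i x, frobNorm (ℓ i x - ℓ i xstar) ≤ M₁ * ‖x - xstar‖)
    {NB : ℝ} (hNB : NB = if (∀ i (j l j' l' : Fin d), (j, l) ≠ (j', l') →
      frobInner (B i j l) (B i j' l') = 0) then (1 : ℝ) else (d : ℝ) ^ 2)
    {δ δM : ℝ} (hδ0 : 0 < δ) (hδ1 : δ ≤ 1) (hδM0 : 0 < δM) (hδM1 : δM ≤ 1)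
    {Ac Bc AM BM : ℝ} (hAc : Ac = δ / 4) (hBc : Bc = 6 / δ - 7 / 2)
    (hAM : AM = δM / 4) (hBM : BM = 6 / δM - 7 / 2)
    {z w x v g : ℕ → EuclideanSpace ℝ (Fin d)} {ξ : ℕ → Bool}
    {L S : ℕ → Fin n → Matrix (Fin d) (Fin d) ℝ}
    (hS : ∀ k i, frobSq (S k i - (ℓ i (z k) - L k i)) ≤ (1 - δ) * frobSq (ℓ i (z k) - L k i))
    (hL : ∀ k i, L (k + 1) i = L k i + S k i)
    {Hmat Hhat : ℕ → Matrix (Fin d) (Fin d) ℝ}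
    (hHmat : ∀ k, Hmat k = (1 / (n : ℝ)) • ∑ i, ∑ j, ∑ l, (L k i) j l • B i j l)
    (hHhatpsd : ∀ k, (Hhat k - μ • (1 : Matrix (Fin d) (Fin d) ℝ)).PosSemidef)
    (hHhatproj : ∀ k, frobNorm (Hhat k - hess fbar xstar) ≤ frobNorm (Hmat k - hess fbar xstar))
    (hξtrue : ∀ k, ξ k = true → g k = gradient fbar (z k) ∧ w (k + 1) = z k)
    (hξfalse : ∀ k, ξ k = false →
      g k = toEuclideanCLM (𝕜 := ℝ) (Hhat k) (z k - w k) + gradient fbar (w k) ∧ w (k + 1) = w k)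
    (hx : ∀ k, x (k + 1) = z k - toEuclideanCLM (𝕜 := ℝ) (Hhat k)⁻¹ (g k))
    (hv : ∀ k, ‖v k - (x (k + 1) - z k)‖ ^ 2 ≤ (1 - δM) * ‖x (k + 1) - z k‖ ^ 2)
    (hz : ∀ k, z (k + 1) = z k + v k)
    {𝓗 : ℕ → ℝ} (h𝓗 : ∀ k, 𝓗 k = (1 / (n : ℝ)) * ∑ i, frobSq (L k i - ℓ i xstar))
    {c₂ : ℝ} (hc₂ : c₂ = min (AM * μ ^ 2 / (4 * H ^ 2 * BM))
      (Ac * AM * μ ^ 2 / (16 * NB * R ^ 2 * BM * Bc * M₁ ^ 2)))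
    (hz0 : ‖z 0 - xstar‖ ^ 2 ≤ c₂) (hw0 : ‖w 0 - xstar‖ ^ 2 ≤ c₂)
    (h𝓗0 : 𝓗 0 ≤ AM * μ ^ 2 / (16 * NB * R ^ 2 * BM)) (k : ℕ) :
    ‖z k - xstar‖ ^ 2 ≤ c₂ ∧ ‖w k - xstar‖ ^ 2 ≤ c₂
      ∧ 𝓗 k ≤ AM * μ ^ 2 / (16 * NB * R ^ 2 * BM) := by
  have hBc0 : 0 < Bc := hBc ▸ compression_coeff_pos hδ0 hδ1
  have hBM0 : 0 < BM := hBM ▸ compression_coeff_pos hδM0 hδM1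
  have hAM0 : 0 < AM := by linarith
  have hNB0 : 0 ≤ NB := by rw [hNB]; split_ifs <;> positivity
  obtain ⟨hc₂H, hc₂M₁⟩ := mul_le_of_eq_min_thresholds (by linarith) hBc0.le hAM0.le hBM0.le
    (sq_nonneg μ) hNB0 hc₂
  subst hfbar
  induction k with
  | zero => exact ⟨hz0, hw0, h𝓗0⟩
  | succ k ih =>
    obtain ⟨hzk, hwk, h𝓗k⟩ := ih
    have hw : ‖w (k + 1) - xstar‖ ^ 2 ≤ c₂ := by
      cases hk : ξ k
      exacts [(hξfalse k hk).2 ▸ hwk, (hξtrue k hk).2 ▸ hzk]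
    have hstep := toEuclideanCLM_sub_eq_neg_of_bl1_step
      (isUnit_of_posSemidef_sub_smul_one hμ (hHhatpsd k))
      ((ξ k).eq_false_or_eq_true.imp (hξtrue k) (hξfalse k)) (hx k)
    have hHess : 16 * BM * ‖toEuclideanCLM (𝕜 := ℝ) (Hhat k)
        - fderiv ℝ (gradient fun x => 1 / (n : ℝ) * ∑ i, f i x) xstar‖ ^ 2 ≤ AM * μ ^ 2 := by
      have herr := norm_sq_toEuclideanCLM_sub_fderiv_gradient_le hf hf' hBR hNB hrep
        (hHmat k ▸ hHhatproj k)
      rw [← h𝓗] at herr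
      linarith [mul_le_mul_of_nonneg_left herr hBM0.le,
        mul_le_of_le_div₀ (by positivity) (by positivity) h𝓗k]
    have hnewton : BM * ‖x (k + 1) - xstar‖ ^ 2 ≤ AM * c₂ :=
      mul_norm_sq_newton_step_sub_le hμ hBM0.le (mul_norm_le_norm_toEuclideanCLM (hHhatpsd k))
        (differentiable_gradient_average hf hf')
        (fun y => norm_fderiv_gradient_average_sub_le hf hf' hn fun i => hH i y) hstar hstep hw
        hHess hc₂H
    refine ⟨?_, hw, ?_⟩
    · rw [hz]
      exact norm_sq_compressed_step_sub_le_of_le hδM0 hδM1 (hv k) hzk (by rwa [← hAM, ← hBM])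
    · simp only [h𝓗, hL] at h𝓗k ⊢
      refine average_frobSq_compressed_step_sub_le_of_le hδ0 hδ1 (hS k) h𝓗k ?_
      rw [← hAc, ← hBc]
      exact (mul_le_mul_of_nonneg_left
        (average_frobSq_sub_le hn (fun i => hℓLip i (z k)) hzk) hBc0.le).trans hc₂M₁

/-- Theorem 4.10 (ii) (neighborhood invariance for BL1), with deterministic contraction
compressors for both Hessians and models, for every realization of the Bernoulli
variables `ξ^k`. -/
theorem bl1_neighborhood_invariance (d n : ℕ) (hn : 1 ≤ n)
    (f : Fin n → EuclideanSpace ℝ (Fin d) → ℝ)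
    (hf : ∀ i, ContDiff ℝ 2 (f i))
    (μ : ℝ) (hμ : 0 < μ)
    (fbar : EuclideanSpace ℝ (Fin d) → ℝ)
    (hfbar : fbar = fun x => (1 / (n : ℝ)) * ∑ i, f i x)
    (hsc : ∀ x, ((hess fbar x) - μ • (1 : Matrix (Fin d) (Fin d) ℝ)).PosSemidef)
    (H : ℝ)
    (hH : ∀ i x y, specNorm (hess (f i) x - hess (f i) y) ≤ H * ‖x - y‖)
    (xstar : EuclideanSpace ℝ (Fin d)) (hstar : gradient fbar xstar = 0)
    (R : ℝ) (B : Fin n → Fin d → Fin d → Matrix (Fin d) (Fin d) ℝ)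
    (hBR : ∀ i j l, frobNorm (B i j l) ≤ R)
    (ℓ : Fin n → EuclideanSpace ℝ (Fin d) → Matrix (Fin d) (Fin d) ℝ)
    (hrep : ∀ i x, hess (f i) x = ∑ j, ∑ l, (ℓ i x) j l • B i j l)
    (M₁ : ℝ)
    (hℓLip : ∀ i x y, frobNorm (ℓ i x - ℓ i y) ≤ M₁ * ‖x - y‖)
    (NB : ℝ)
    (hNB : NB = if (∀ i (j l j' l' : Fin d), (j, l) ≠ (j', l') →
        frobInner (B i j l) (B i j' l') = 0) then (1 : ℝ) else (d : ℝ) ^ 2)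
    (δ δM : ℝ) (hδ0 : 0 < δ) (hδ1 : δ ≤ 1) (hδM0 : 0 < δM) (hδM1 : δM ≤ 1)
    (Ac Bc AM BM : ℝ) (hAc : Ac = δ / 4) (hBc : Bc = 6 / δ - 7 / 2)
    (hAM : AM = δM / 4) (hBM : BM = 6 / δM - 7 / 2)
    (z w x v : ℕ → EuclideanSpace ℝ (Fin d)) (hw0 : w 0 = z 0)
    (ξ : ℕ → Bool)
    (L S : ℕ → Fin n → Matrix (Fin d) (Fin d) ℝ)
    (hS : ∀ k i, frobSq (S k i - (ℓ i (z k) - L k i))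
      ≤ (1 - δ) * frobSq (ℓ i (z k) - L k i))
    (hL : ∀ k i, L (k + 1) i = L k i + S k i)
    (Hmat : ℕ → Matrix (Fin d) (Fin d) ℝ)
    (hHmat : ∀ k, Hmat k = (1 / (n : ℝ)) • ∑ i, ∑ j, ∑ l, (L k i) j l • B i j l)
    (Hhat : ℕ → Matrix (Fin d) (Fin d) ℝ)
    (hHhatsymm : ∀ k, (Hhat k).IsSymm)
    (hHhatpsd : ∀ k, (Hhat k - μ • (1 : Matrix (Fin d) (Fin d) ℝ)).PosSemidef)
    (hHhatproj : ∀ k, frobNorm (Hhat k - hess fbar xstar)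
      ≤ frobNorm (Hmat k - hess fbar xstar))
    (g : ℕ → EuclideanSpace ℝ (Fin d))
    (hξtrue : ∀ k, ξ k = true →
      g k = gradient fbar (z k) ∧ w (k + 1) = z k)
    (hξfalse : ∀ k, ξ k = false →
      g k = Matrix.toEuclideanCLM (𝕜 := ℝ) (Hhat k) (z k - w k)
              + gradient fbar (w k)
        ∧ w (k + 1) = w k)
    (hx : ∀ k, x (k + 1) = z k - Matrix.toEuclideanCLM (𝕜 := ℝ) (Hhat k)⁻¹ (g k))
    (hv : ∀ k, ‖v k - (x (k + 1) - z k)‖ ^ 2 ≤ (1 - δM) * ‖x (k + 1) - z k‖ ^ 2)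
    (hz : ∀ k, z (k + 1) = z k + v k)
    (𝓗 : ℕ → ℝ)
    (h𝓗 : ∀ k, 𝓗 k = (1 / (n : ℝ)) * ∑ i, frobSq (L k i - ℓ i xstar))
    (c₂ : ℝ)
    (hc₂ : c₂ = min (AM * μ ^ 2 / (4 * H ^ 2 * BM))
      (Ac * AM * μ ^ 2 / (16 * NB * R ^ 2 * BM * Bc * M₁ ^ 2)))
    (hinit1 : ‖z 0 - xstar‖ ^ 2 ≤ c₂)
    (hinit2 : 𝓗 0 ≤ AM * μ ^ 2 / (16 * NB * R ^ 2 * BM)) :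
    ∀ k, ‖z k - xstar‖ ^ 2 ≤ c₂ ∧ 𝓗 k ≤ AM * μ ^ 2 / (16 * NB * R ^ 2 * BM) := by
  intro k
  have h := bl1_neighborhood_invariance_general hn
    (fun i => (hf i).differentiable two_ne_zero) (fun i => differentiable_gradient (hf i)) hμ
    hfbar hstar (fun i x => hH i x xstar) hBR (fun i => hrep i xstar)
    (fun i x => hℓLip i x xstar) hNB hδ0 hδ1 hδM0 hδM1 hAc hBc hAM hBM hS hL hHmat hHhatpsd
    hHhatproj hξtrue hξfalse hx hv hz h𝓗 hc₂ hinit1 (hw0 ▸ hinit1) hinit2 k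
  exact ⟨h.1, h.2.2⟩
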